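/- Let N be a nilpotent-independent (NI) subset of M(d,q), let 0 \le i \le d, and let W be the span of the first i standard basis vectors of \mathbb{F}_q^d. Then |{X \in N : V_inv(X) = W}| = q^{i(d-i)} \cdot q^{(d-i)(d-i-1)} \cdot |N_i|. -/

import Mathlib

open Matrix Finset

/-- `Vinv X` : the "invertible part" subspace, `range (X^d)`. -/
noncomputable def Vinv {F : Type*} [Field F] {d : ℕ} (X : Matrix (Fin d) (Fin d) F) :
    Submodule F (Fin d → F) :=
  LinearMap.range (X.mulVecLin ^ d)

noncomputable def Vnil {F : Type*} [Field F] {d : ℕ} (X : Matrix (Fin d) (Fin d) F) :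
    Submodule F (Fin d → F) :=
  LinearMap.ker (X.mulVecLin ^ d)

open Classical in
/-- The projection of `F^d` onto `Vinv X` with kernel `Vnil X`. -/
noncomputable def fittingProj {F : Type*} [Field F] {d : ℕ} (X : Matrix (Fin d) (Fin d) F) :
    (Fin d → F) →ₗ[F] (Fin d → F) :=
  if h : IsCompl (Vinv X) (Vnil X) then
    (Vinv X).subtype ∘ₗ Submodule.linearProjOfIsCompl (Vinv X) (Vnil X) h
  else 0

/-- `N` is a nilpotent-independent subset of `M(d,q)`. -/
def IsNI {F : Type*} [Field F] {d : ℕ} (N : Set (Matrix (Fin d) (Fin d) F)) : Prop :=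
  (∀ X ∈ N, ∀ g : GL (Fin d) F, (↑g⁻¹ : Matrix (Fin d) (Fin d) F) * X * (↑g : Matrix (Fin d) (Fin d) F) ∈ N) ∧
  (∀ X : Matrix (Fin d) (Fin d) F,
    X ∈ N ↔ LinearMap.toMatrix' (X.mulVecLin ∘ₗ fittingProj X) ∈ N)

/-- the block-diagonal matrix `diag(Y, 0)` of size `d`, for `Y` of size `i ≤ d`. -/
def embedBlock {F : Type*} [Field F] (d : ℕ) {i : ℕ} (Y : Matrix (Fin i) (Fin i) F) :
    Matrix (Fin d) (Fin d) F :=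
  Matrix.of fun r c =>
    if h : (r : ℕ) < i ∧ (c : ℕ) < i then Y ⟨r, h.1⟩ ⟨c, h.2⟩ else 0

/-- `N_i`, the invertible matrices of size `i` whose block-diagonal extension lies in `N`. -/
def NIsub {F : Type*} [Field F] {d : ℕ} (N : Set (Matrix (Fin d) (Fin d) F)) (i : ℕ) :
    Set (GL (Fin i) F) :=
  {Y : GL (Fin i) F | embedBlock d (↑Y : Matrix (Fin i) (Fin i) F) ∈ N}

/-!
Every matrix has the block form `X = [[A, B], [C, D]]` relative to the span `W` of the first `i`
basis vectors, and `Vinv X = W` says exactly that `C = 0`, `A` is invertible and `D` is nilpotent.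
The projection onto `W` along `Vnil X` is `[[1, T], [0, 0]]`, so `X` composed with it is
`[[A, A * T], [0, 0]]`, which the unipotent matrix `[[1, T], [0, 1]]` conjugates from `diag(A, 0)`.
Hence `X ∈ N` depends only on `A`, while `B` and the nilpotent matrix `D` are free.

The number `q ^ (n * (n - 1))` of nilpotent `n × n` matrices is found by induction: sorting all
matrices by the dimension of `Vinv X`, and sorting all `n`-tuples of vectors by the length of their
longest linearly independent prefix, gives two decompositions of `q ^ (n * n)` in which, by the
induction hypothesis, every term but the one for dimension `0` agrees.
-/

section LinearAlgebra

open Module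

variable {F V V' : Type*} [Field F] [AddCommGroup V] [Module F V] [AddCommGroup V'] [Module F V']

theorem ker_pow_add_eq_ker_pow [FiniteDimensional F V] (f : End F V) {n : ℕ}
    (hn : finrank F V ≤ n) (k : ℕ) :
    LinearMap.ker (f ^ (n + k)) = LinearMap.ker (f ^ n) := by
  rw [End.ker_pow_eq_ker_pow_finrank_of_le hn,
    End.ker_pow_eq_ker_pow_finrank_of_le (hn.trans (Nat.le_add_right n k))]

theorem isCompl_range_pow_ker_pow [FiniteDimensional F V] (f : End F V) {n : ℕ}
    (hn : finrank F V ≤ n) : IsCompl (LinearMap.range (f ^ n)) (LinearMap.ker (f ^ n)) := by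
  rw [Submodule.isCompl_iff_disjoint _ _ (LinearMap.finrank_range_add_finrank_ker _).ge,
    Submodule.disjoint_def]
  rintro _ ⟨x, rfl⟩ hx
  have hx' : x ∈ LinearMap.ker (f ^ (n + n)) := by rwa [pow_add]
  rwa [ker_pow_add_eq_ker_pow f hn] at hx'

theorem range_pow_succ_eq_range_pow [FiniteDimensional F V] (f : End F V) {n : ℕ}
    (hn : finrank F V ≤ n) : LinearMap.range (f ^ (n + 1)) = LinearMap.range (f ^ n) := by
  refine Submodule.eq_of_le_of_finrank_eq ?_ ?_
  · rw [pow_succ]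
    exact LinearMap.range_comp_le_range f (f ^ n)
  · have hker : finrank F (LinearMap.ker (f ^ (n + 1))) = finrank F (LinearMap.ker (f ^ n)) := by
      rw [ker_pow_add_eq_ker_pow f hn 1]
    have hsucc := LinearMap.finrank_range_add_finrank_ker (f ^ (n + 1))
    have hpow := LinearMap.finrank_range_add_finrank_ker (f ^ n)
    omega

theorem range_pow_eq_iff [FiniteDimensional F V] (f : End F V) {n : ℕ} (hn : finrank F V ≤ n)
    (U : Submodule F V) :
    LinearMap.range (f ^ n) = U ↔ U.map f = U ∧ LinearMap.range (f ^ n) ≤ U := by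
  constructor
  · rintro rfl
    refine ⟨?_, le_rfl⟩
    rw [← LinearMap.range_comp, ← End.mul_eq_comp, ← pow_succ', range_pow_succ_eq_range_pow f hn]
  · rintro ⟨hU, hle⟩
    have hmap : U.map (f ^ n) = U := by
      clear hle hn
      induction n with
      | zero => exact Submodule.map_id U
      | succ n ih => rw [pow_succ, End.mul_eq_comp, Submodule.map_comp, hU, ih]
    exact hle.antisymm (hmap.ge.trans LinearMap.map_le_range)

theorem isNilpotent_iff_pow_eq_zero_of_finrank_le [FiniteDimensional F V] (f : End F V) {n : ℕ}
    (hn : finrank F V ≤ n) : IsNilpotent f ↔ f ^ n = 0 := by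
  refine ⟨fun ⟨k, hk⟩ => ?_, fun h => ⟨n, h⟩⟩
  rw [← LinearMap.ker_eq_top, ← ker_pow_add_eq_ker_pow f hn k, pow_add, hk, mul_zero,
    LinearMap.ker_zero]

theorem range_conj_pow (e : V ≃ₗ[F] V') (f : End F V) (n : ℕ) :
    LinearMap.range (e.conj f ^ n) = (LinearMap.range (f ^ n)).map e.toLinearMap := by
  have hconj : e.conj f ^ n = e.conj (f ^ n) := (map_pow e.conjRingEquiv f n).symm
  rw [hconj, LinearEquiv.conj_apply, LinearEquiv.range_comp, LinearMap.range_comp]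

theorem exists_linearEquiv_map_eq [FiniteDimensional F V] {U W : Submodule F V}
    (h : finrank F U = finrank F W) : ∃ e : V ≃ₗ[F] V, U.map e.toLinearMap = W := by
  obtain ⟨e, he⟩ := Submodule.exists_linearEquiv_restrict_eq (LinearEquiv.ofFinrankEq U W h)
  refine ⟨e, Submodule.eq_of_le_of_finrank_eq ?_ ((LinearEquiv.finrank_map_eq e U).trans h)⟩
  rintro _ ⟨x, hx, rfl⟩
  exact he ⟨x, hx⟩ ▸ Subtype.property _

theorem card_matrix (R m n : Type*) [Finite m] [Finite n] :
    Nat.card (Matrix m n R) = Nat.card R ^ (Nat.card m * Nat.card n) := by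
  rw [Matrix, Nat.card_fun, Nat.card_fun, ← pow_mul, mul_comm]

theorem card_spanning_family_eq_card_GL [Finite F] [FiniteDimensional F V] {k : ℕ}
    (U : Submodule F V) (hU : finrank F U = k) :
    Nat.card {b : Fin k → V // Submodule.span F (Set.range b) = U} = Nat.card (GL (Fin k) F) := by
  have := Fintype.ofFinite F
  have : Finite V := Module.finite_of_finite F
  rw [Matrix.card_GL_field, ← hU, ← card_linearIndependent le_rfl, hU]
  symm
  refine Nat.card_congr (Equiv.ofBijective (fun s => ⟨fun j => s.1 j, ?_⟩) ⟨?_, ?_⟩)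
  · have hspan : Submodule.span F (Set.range s.1) = ⊤ :=
      s.2.span_eq_top_of_card_eq_finrank' (by rw [hU, Fintype.card_fin])
    rw [← Function.comp_def Subtype.val, Set.range_comp, ← Submodule.coe_subtype,
      ← Submodule.map_span, hspan, Submodule.map_subtype_top]
  · intro s t hst
    ext j : 2
    exact Subtype.ext (congrFun (congrArg Subtype.val hst) j)
  · rintro ⟨b, hb⟩
    have hmem : ∀ j, b j ∈ U := fun j => hb ▸ Submodule.subset_span ⟨j, rfl⟩
    have hli : LinearIndependent F b := by
      rw [linearIndependent_iff_card_eq_finrank_span, Set.finrank, hb, hU, Fintype.card_fin]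
    exact ⟨⟨fun j => ⟨b j, hmem j⟩, LinearIndependent.of_comp U.subtype hli⟩, rfl⟩

theorem card_submodule_mul_card_GL [Fintype F] [FiniteDimensional F V] {k : ℕ}
    (hk : k ≤ finrank F V) :
    Nat.card {U : Submodule F V // finrank F U = k} * Nat.card (GL (Fin k) F) =
      ∏ j ∈ range k, (Fintype.card F ^ finrank F V - Fintype.card F ^ j) := by
  have : Finite V := Module.finite_of_finite F
  have := Fintype.ofFinite {U : Submodule F V // finrank F U = k}
  have hindep (b : Fin k → V) :
      LinearIndependent F b ↔ finrank F (Submodule.span F (Set.range b)) = k := by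
    rw [linearIndependent_iff_card_eq_finrank_span, Fintype.card_fin, eq_comm, Set.finrank]
  rw [Finset.prod_range, ← card_linearIndependent hk,
    ← Nat.card_congr (Equiv.sigmaSubtypeFiberEquivSubtype
      (fun b => Submodule.span F (Set.range b)) (q := fun U => finrank F U = k) hindep),
    Nat.card_sigma,
    sum_congr rfl fun U _ => card_spanning_family_eq_card_GL U.1 U.2,
    sum_const, card_univ, smul_eq_mul, Nat.card_eq_fintype_card]

end LinearAlgebra

section FittingDecomposition

variable {F : Type*} [Field F] {d : ℕ}

theorem isCompl_Vinv_Vnil (X : Matrix (Fin d) (Fin d) F) : IsCompl (Vinv X) (Vnil X) :=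
  isCompl_range_pow_ker_pow X.mulVecLin (Module.finrank_fin_fun F).le

theorem fittingProj_eq_projection (X : Matrix (Fin d) (Fin d) F) :
    fittingProj X = (Vinv X).projection (Vnil X) (isCompl_Vinv_Vnil X) :=
  dif_pos (isCompl_Vinv_Vnil X)

theorem card_Vinv_eq_of_finrank_eq {U W : Submodule F (Fin d → F)}
    (h : Module.finrank F U = Module.finrank F W) :
    Nat.card {X : Matrix (Fin d) (Fin d) F // Vinv X = U} =
      Nat.card {X : Matrix (Fin d) (Fin d) F // Vinv X = W} := by
  obtain ⟨e, rfl⟩ := exists_linearEquiv_map_eq h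
  let conj : Matrix (Fin d) (Fin d) F ≃ Matrix (Fin d) (Fin d) F :=
    Matrix.toLin'.toEquiv.trans (e.conj.toEquiv.trans Matrix.toLin'.symm.toEquiv)
  have hconj (X : Matrix (Fin d) (Fin d) F) : (conj X).mulVecLin = e.conj X.mulVecLin :=
    Matrix.toLin'.apply_symm_apply (e.conj X.mulVecLin)
  refine Nat.card_congr (conj.subtypeEquiv fun X => ?_)
  rw [Vinv, Vinv, hconj, range_conj_pow]
  exact (Submodule.map_injective_of_injective e.injective).eq_iff.symm

theorem IsNI.conj_mem_iff {N : Set (Matrix (Fin d) (Fin d) F)} (hN : IsNI N)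
    (X : Matrix (Fin d) (Fin d) F) (g : GL (Fin d) F) :
    (↑g⁻¹ : Matrix (Fin d) (Fin d) F) * X * (↑g : Matrix (Fin d) (Fin d) F) ∈ N ↔ X ∈ N := by
  refine ⟨fun h => ?_, fun h => hN.1 X h g⟩
  simpa [mul_assoc] using hN.1 _ h g⁻¹

theorem IsNI.univ : IsNI (Set.univ : Set (Matrix (Fin d) (Fin d) F)) :=
  ⟨fun _ _ _ => Set.mem_univ _, fun _ => Iff.rfl⟩

end FittingDecomposition

section BlockMatrix

variable {R : Type*} [CommSemiring R] {i m : ℕ}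

/-- The block matrix `[[A, B], [C, D]]` with rows and columns indexed by `Fin (i + m)`. -/
def blockMatrix (A : Matrix (Fin i) (Fin i) R) (B : Matrix (Fin i) (Fin m) R)
    (C : Matrix (Fin m) (Fin i) R) (D : Matrix (Fin m) (Fin m) R) :
    Matrix (Fin (i + m)) (Fin (i + m)) R :=
  Matrix.reindexAlgEquiv R R finSumFinEquiv (Matrix.fromBlocks A B C D)

theorem exists_eq_blockMatrix (X : Matrix (Fin (i + m)) (Fin (i + m)) R) :
    ∃ (A : Matrix (Fin i) (Fin i) R) (B : Matrix (Fin i) (Fin m) R)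
      (C : Matrix (Fin m) (Fin i) R) (D : Matrix (Fin m) (Fin m) R), X = blockMatrix A B C D := by
  obtain ⟨Y, rfl⟩ := (Matrix.reindexAlgEquiv R R (finSumFinEquiv (m := i) (n := m))).surjective X
  exact ⟨_, _, _, _, by rw [blockMatrix, Matrix.fromBlocks_toBlocks]⟩

theorem blockMatrix_inj {A A' : Matrix (Fin i) (Fin i) R} {B B' : Matrix (Fin i) (Fin m) R}
    {C C' : Matrix (Fin m) (Fin i) R} {D D' : Matrix (Fin m) (Fin m) R} :
    blockMatrix A B C D = blockMatrix A' B' C' D' ↔ A = A' ∧ B = B' ∧ C = C' ∧ D = D' := by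
  rw [blockMatrix, blockMatrix, EmbeddingLike.apply_eq_iff_eq, Matrix.fromBlocks_inj]

theorem blockMatrix_mul (A A' : Matrix (Fin i) (Fin i) R) (B B' : Matrix (Fin i) (Fin m) R)
    (C C' : Matrix (Fin m) (Fin i) R) (D D' : Matrix (Fin m) (Fin m) R) :
    blockMatrix A B C D * blockMatrix A' B' C' D' =
      blockMatrix (A * A' + B * C') (A * B' + B * D') (C * A' + D * C') (C * B' + D * D') := by
  simp only [blockMatrix, ← map_mul, Matrix.fromBlocks_multiply]

theorem blockMatrix_one :
    blockMatrix (1 : Matrix (Fin i) (Fin i) R) 0 0 (1 : Matrix (Fin m) (Fin m) R) = 1 := by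
  rw [blockMatrix, Matrix.fromBlocks_one, map_one]

theorem exists_blockMatrix_pow_eq (A : Matrix (Fin i) (Fin i) R) (B : Matrix (Fin i) (Fin m) R)
    (D : Matrix (Fin m) (Fin m) R) (k : ℕ) :
    ∃ B', blockMatrix A B 0 D ^ k = blockMatrix (A ^ k) B' 0 (D ^ k) := by
  induction k with
  | zero => exact ⟨0, by simp only [pow_zero, blockMatrix_one]⟩
  | succ k ih =>
    obtain ⟨B', hB'⟩ := ih
    refine ⟨A ^ k * B + B' * D, ?_⟩
    simp only [pow_succ, hB', blockMatrix_mul, Matrix.mul_zero, Matrix.zero_mul, add_zero, zero_add]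

theorem blockMatrix_mulVec_append (A : Matrix (Fin i) (Fin i) R) (B : Matrix (Fin i) (Fin m) R)
    (C : Matrix (Fin m) (Fin i) R) (D : Matrix (Fin m) (Fin m) R) (u : Fin i → R) (v : Fin m → R) :
    blockMatrix A B C D *ᵥ Fin.append u v = Fin.append (A *ᵥ u + B *ᵥ v) (C *ᵥ u + D *ᵥ v) := by
  ext j
  refine Fin.addCases (fun j => ?_) (fun j => ?_) j <;>
    simp [blockMatrix, Matrix.mulVec, dotProduct, Fin.sum_univ_add]

end BlockMatrix

section CoordSubspace

theorem exists_eq_append {α : Type*} {i m : ℕ} (x : Fin (i + m) → α) :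
    ∃ u v, x = Fin.append u v :=
  ⟨_, _, Fin.append_castAdd_natAdd.symm⟩

theorem append_inj {α : Type*} {i m : ℕ} {u u' : Fin i → α} {v v' : Fin m → α} :
    Fin.append u v = Fin.append u' v' ↔ u = u' ∧ v = v' :=
  (Fin.appendEquiv i m).injective.eq_iff (a := (u, v)) (b := (u', v')) |>.trans Prod.mk_inj

variable {R : Type*} [CommRing R] {i m : ℕ}

/-- The span of the first `i` standard basis vectors of `R ^ (i + m)`, encoded as the subspace of
vectors whose last `m` coordinates vanish. -/
def coordSubspace (R : Type*) [CommRing R] (i m : ℕ) : Submodule R (Fin (i + m) → R) :=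
  LinearMap.ker (LinearMap.funLeft R R (Fin.natAdd i))

theorem append_mem_coordSubspace {u : Fin i → R} {v : Fin m → R} :
    Fin.append u v ∈ coordSubspace R i m ↔ v = 0 := by
  rw [coordSubspace, LinearMap.mem_ker]
  have happ : LinearMap.funLeft R R (Fin.natAdd i) (Fin.append u v) = v :=
    funext fun j => Fin.append_right u v j
  rw [happ]

theorem span_single_castLE (hi : i ≤ i + m) :
    Submodule.span R (Set.range fun j : Fin i => Pi.single (Fin.castLE hi j) (1 : R)) =
      coordSubspace R i m := by
  apply le_antisymm
  · rw [Submodule.span_le]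
    rintro _ ⟨j, rfl⟩
    refine LinearMap.mem_ker.2 (funext fun k => Pi.single_eq_of_ne ?_ _)
    exact ne_of_gt (j.isLt.trans_le (Nat.le_add_right i k))
  · intro x hx
    obtain ⟨u, v, rfl⟩ := exists_eq_append x
    obtain rfl := append_mem_coordSubspace.1 hx
    rw [← Finset.univ_sum_single (Fin.append u 0), Fin.sum_univ_add]
    refine Submodule.add_mem _ (Submodule.sum_mem _ fun j _ => ?_) ?_
    · rw [← mul_one (Fin.append u 0 _), ← smul_eq_mul, Pi.single_smul]
      exact Submodule.smul_mem _ _ (Submodule.subset_span ⟨j, rfl⟩)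
    · simp

theorem range_blockMatrix_le_iff {A : Matrix (Fin i) (Fin i) R} {B : Matrix (Fin i) (Fin m) R}
    {C : Matrix (Fin m) (Fin i) R} {D : Matrix (Fin m) (Fin m) R} :
    LinearMap.range (blockMatrix A B C D).mulVecLin ≤ coordSubspace R i m ↔ C = 0 ∧ D = 0 := by
  have hmem (u : Fin i → R) (v : Fin m → R) :
      blockMatrix A B C D *ᵥ Fin.append u v ∈ coordSubspace R i m ↔ C *ᵥ u + D *ᵥ v = 0 := by
    rw [blockMatrix_mulVec_append, append_mem_coordSubspace]
  constructor
  · intro h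
    have hzero (u : Fin i → R) (v : Fin m → R) : C *ᵥ u + D *ᵥ v = 0 :=
      (hmem u v).1 (h ⟨_, rfl⟩)
    refine ⟨Matrix.ext_of_mulVec_single fun k => ?_, Matrix.ext_of_mulVec_single fun k => ?_⟩
    · simpa only [Matrix.mulVec_zero, Matrix.zero_mulVec, add_zero] using hzero (Pi.single k 1) 0
    · simpa only [Matrix.mulVec_zero, Matrix.zero_mulVec, zero_add] using hzero 0 (Pi.single k 1)
  · rintro ⟨rfl, rfl⟩ _ ⟨x, rfl⟩
    obtain ⟨u, v, rfl⟩ := exists_eq_append x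
    exact (hmem u v).2 (by simp)

theorem map_coordSubspace_eq_iff {A : Matrix (Fin i) (Fin i) R} {B : Matrix (Fin i) (Fin m) R}
    {C : Matrix (Fin m) (Fin i) R} {D : Matrix (Fin m) (Fin m) R} :
    (coordSubspace R i m).map (blockMatrix A B C D).mulVecLin = coordSubspace R i m ↔
      C = 0 ∧ IsUnit A := by
  have happly (u : Fin i → R) :
      blockMatrix A B C D *ᵥ Fin.append u 0 = Fin.append (A *ᵥ u) (C *ᵥ u) := by
    simp [blockMatrix_mulVec_append]
  have hmem (u : Fin i → R) : Fin.append u 0 ∈ coordSubspace R i m :=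
    append_mem_coordSubspace.2 rfl
  rw [← Matrix.mulVec_surjective_iff_isUnit]
  constructor
  · intro h
    refine ⟨Matrix.ext_of_mulVec_single fun k => ?_, fun w => ?_⟩
    · rw [Matrix.zero_mulVec, ← append_mem_coordSubspace (u := A *ᵥ Pi.single k 1), ← happly]
      exact h.le ⟨_, hmem _, rfl⟩
    · obtain ⟨x, hx, hxw⟩ := h.ge (hmem w)
      obtain ⟨u, v, rfl⟩ := exists_eq_append x
      obtain rfl := append_mem_coordSubspace.1 hx
      exact ⟨u, (append_inj.1 ((happly u).symm.trans hxw)).1⟩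
  · rintro ⟨rfl, hA⟩
    refine le_antisymm ?_ fun x hx => ?_
    · rintro _ ⟨x, hx, rfl⟩
      obtain ⟨u, v, rfl⟩ := exists_eq_append x
      obtain rfl := append_mem_coordSubspace.1 hx
      rw [Matrix.mulVecLin_apply, happly, Matrix.zero_mulVec]
      exact hmem _
    · obtain ⟨w, v, rfl⟩ := exists_eq_append x
      obtain rfl := append_mem_coordSubspace.1 hx
      obtain ⟨u, rfl⟩ := hA w
      exact ⟨_, hmem u, (happly u).trans (by rw [Matrix.zero_mulVec])⟩

variable {F : Type*} [Field F]

theorem finrank_coordSubspace : Module.finrank F (coordSubspace F i m) = i := by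
  have hrank := LinearMap.finrank_range_add_finrank_ker
    (LinearMap.funLeft F F (Fin.natAdd i (m := m)))
  rw [LinearMap.range_eq_top.2
    (LinearMap.funLeft_surjective_of_injective F F _ (Fin.natAdd_injective m i)), finrank_top,
    Module.finrank_fin_fun, Module.finrank_fin_fun] at hrank
  rw [coordSubspace]
  omega

theorem Vinv_blockMatrix_eq_iff {A : Matrix (Fin i) (Fin i) F} {B : Matrix (Fin i) (Fin m) F}
    {C : Matrix (Fin m) (Fin i) F} {D : Matrix (Fin m) (Fin m) F} :
    Vinv (blockMatrix A B C D) = coordSubspace F i m ↔ C = 0 ∧ IsUnit A ∧ IsNilpotent D := by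
  have hnil : IsNilpotent D ↔ D ^ (i + m) = 0 := by
    rw [← Matrix.isNilpotent_toLin'_iff,
      isNilpotent_iff_pow_eq_zero_of_finrank_le (n := i + m) _ (by simp), ← Matrix.toLin'_pow,
      LinearEquiv.map_eq_zero_iff]
  rw [Vinv, range_pow_eq_iff _ (Module.finrank_fin_fun F).le, map_coordSubspace_eq_iff, and_assoc]
  refine and_congr_right ?_
  rintro rfl
  obtain ⟨B', hB'⟩ := exists_blockMatrix_pow_eq A B D (i + m)
  have hpow : (blockMatrix A B 0 D).mulVecLin ^ (i + m) =
      (blockMatrix (A ^ (i + m)) B' 0 (D ^ (i + m))).mulVecLin := by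
    rw [← hB', ← Matrix.toLin'_apply', ← Matrix.toLin'_apply', Matrix.toLin'_pow]
  rw [hpow, range_blockMatrix_le_iff, hnil, and_iff_right rfl]

theorem exists_toMatrix'_eq_blockMatrix {P : (Fin (i + m) → F) →ₗ[F] (Fin (i + m) → F)}
    (hrange : ∀ x, P x ∈ coordSubspace F i m) (hid : ∀ x ∈ coordSubspace F i m, P x = x) :
    ∃ T, LinearMap.toMatrix' P = blockMatrix 1 T 0 0 := by
  obtain ⟨A, T, C, D, hP⟩ := exists_eq_blockMatrix (LinearMap.toMatrix' P)
  have hPx (x : Fin (i + m) → F) : blockMatrix A T C D *ᵥ x = P x := by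
    rw [← hP, LinearMap.toMatrix'_mulVec]
  obtain ⟨rfl, rfl⟩ : C = 0 ∧ D = 0 := by
    rw [← range_blockMatrix_le_iff (A := A) (B := T)]
    rintro _ ⟨x, rfl⟩
    rw [Matrix.mulVecLin_apply, hPx]
    exact hrange x
  have hA : A = 1 := Matrix.ext_of_mulVec_single fun k => by
    have hfix := (hPx _).trans
      (hid (Fin.append (Pi.single k 1) 0) (append_mem_coordSubspace.2 rfl))
    rw [blockMatrix_mulVec_append] at hfix
    simpa only [Matrix.mulVec_zero, Matrix.one_mulVec, add_zero] using (append_inj.1 hfix).1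
  exact ⟨T, hA ▸ hP⟩

end CoordSubspace

section NilpotentIndependent

variable {F : Type*} [Field F]

theorem embedBlock_eq_blockMatrix {i m : ℕ} (A : Matrix (Fin i) (Fin i) F) :
    embedBlock (i + m) A = blockMatrix A 0 0 0 := by
  ext r c
  refine Fin.addCases (fun r => ?_) (fun r => ?_) r <;>
    refine Fin.addCases (fun c => ?_) (fun c => ?_) c <;>
      simp [embedBlock, blockMatrix]

theorem exists_conj_blockMatrix_eq {R : Type*} [CommRing R] {i m : ℕ}
    (A : Matrix (Fin i) (Fin i) R) (T : Matrix (Fin i) (Fin m) R) :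
    ∃ g : GL (Fin (i + m)) R, (↑g⁻¹ : Matrix (Fin (i + m)) (Fin (i + m)) R) *
      blockMatrix A 0 0 0 * (↑g : Matrix (Fin (i + m)) (Fin (i + m)) R) =
        blockMatrix A (A * T) 0 0 := by
  refine ⟨⟨blockMatrix 1 T 0 1, blockMatrix 1 (-T) 0 1, ?_, ?_⟩, ?_⟩
  · simp [blockMatrix_mul, blockMatrix_one]
  · simp [blockMatrix_mul, blockMatrix_one]
  · rw [Units.inv_mk, Units.val_mk, Units.val_mk]
    simp only [blockMatrix_mul, Matrix.one_mul, Matrix.mul_one, Matrix.mul_zero, Matrix.zero_mul,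
      add_zero]

theorem IsNI.blockMatrix_mem_iff {i m : ℕ} {N : Set (Matrix (Fin (i + m)) (Fin (i + m)) F)}
    (hN : IsNI N) {A : Matrix (Fin i) (Fin i) F} {B : Matrix (Fin i) (Fin m) F}
    {D : Matrix (Fin m) (Fin m) F} (hV : Vinv (blockMatrix A B 0 D) = coordSubspace F i m) :
    blockMatrix A B 0 D ∈ N ↔ embedBlock (i + m) A ∈ N := by
  have hproj := fittingProj_eq_projection (blockMatrix A B 0 D)
  obtain ⟨T, hT⟩ : ∃ T, LinearMap.toMatrix' (fittingProj (blockMatrix A B 0 D)) =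
      blockMatrix 1 T 0 0 := by
    refine exists_toMatrix'_eq_blockMatrix (fun x => ?_) fun x hx => ?_
    · rw [hproj, ← hV]
      exact Submodule.projection_apply_mem _ x
    · rw [hproj]
      exact Submodule.projection_apply_of_mem_left _ (hV ▸ hx)
  have hcomp : LinearMap.toMatrix' ((blockMatrix A B 0 D).mulVecLin ∘ₗ
      fittingProj (blockMatrix A B 0 D)) = blockMatrix A (A * T) 0 0 := by
    rw [LinearMap.toMatrix'_comp, hT, ← Matrix.toLin'_apply', LinearMap.toMatrix'_toLin',
      blockMatrix_mul]
    simp only [Matrix.mul_one, Matrix.mul_zero, Matrix.zero_mul, add_zero]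
  obtain ⟨g, hg⟩ := exists_conj_blockMatrix_eq A T
  rw [hN.2, hcomp, embedBlock_eq_blockMatrix, ← hg, hN.conj_mem_iff]

theorem IsNI.card_Vinv_eq_coordSubspace {i m : ℕ}
    {N : Set (Matrix (Fin (i + m)) (Fin (i + m)) F)} (hN : IsNI N) :
    Nat.card {X : Matrix (Fin (i + m)) (Fin (i + m)) F | X ∈ N ∧ Vinv X = coordSubspace F i m} =
      Nat.card F ^ (i * m) * Nat.card {D : Matrix (Fin m) (Fin m) F // IsNilpotent D} *
        Nat.card (NIsub N i) := by
  let triangular : (Matrix (Fin i) (Fin m) F × {D : Matrix (Fin m) (Fin m) F // IsNilpotent D}) ×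
      NIsub N i → {X : Matrix (Fin (i + m)) (Fin (i + m)) F |
        X ∈ N ∧ Vinv X = coordSubspace F i m} :=
    fun ⟨⟨B, D⟩, A⟩ =>
      have hV : Vinv (blockMatrix (A.1 : Matrix (Fin i) (Fin i) F) B 0 D.1) =
          coordSubspace F i m :=
        Vinv_blockMatrix_eq_iff.2 ⟨rfl, A.1.isUnit, D.2⟩
      ⟨blockMatrix A.1 B 0 D.1, (hN.blockMatrix_mem_iff hV).2 A.2, hV⟩
  have htriangular : Function.Bijective triangular := by
    constructor
    · rintro ⟨⟨B, D⟩, A⟩ ⟨⟨B', D'⟩, A'⟩ h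
      obtain ⟨hA, rfl, -, hD⟩ := blockMatrix_inj.1 (congrArg Subtype.val h)
      obtain rfl := Subtype.ext (Units.ext hA)
      obtain rfl := Subtype.ext hD
      rfl
    · rintro ⟨X, hX, hV⟩
      obtain ⟨A, B, C, D, rfl⟩ := exists_eq_blockMatrix X
      obtain ⟨rfl, ⟨A, rfl⟩, hD⟩ := Vinv_blockMatrix_eq_iff.1 hV
      exact ⟨⟨⟨B, D, hD⟩, A, (hN.blockMatrix_mem_iff hV).1 hX⟩, rfl⟩
  rw [← Nat.card_congr (Equiv.ofBijective triangular htriangular), Nat.card_prod, Nat.card_prod,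
    card_matrix, Nat.card_fin, Nat.card_fin]

theorem card_matrix_Vinv_eq_coordSubspace {i m : ℕ} :
    Nat.card {X : Matrix (Fin (i + m)) (Fin (i + m)) F // Vinv X = coordSubspace F i m} =
      Nat.card F ^ (i * m) * Nat.card {D : Matrix (Fin m) (Fin m) F // IsNilpotent D} *
        Nat.card (GL (Fin i) F) := by
  have hcard := IsNI.univ.card_Vinv_eq_coordSubspace (F := F) (i := i) (m := m)
  simpa only [NIsub, Set.mem_univ, true_and, Set.ofPred_true, Nat.card_univ, Set.coe_ofPred]
    using hcard

end NilpotentIndependent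

section NilpotentCount

variable {F : Type*} [Field F] [Fintype F]

theorem card_matrix_finrank_Vinv_eq {n i : ℕ} (hi : i ≤ n) :
    Nat.card {X : Matrix (Fin n) (Fin n) F // Module.finrank F (Vinv X) = i} =
      (∏ j ∈ range i, (Fintype.card F ^ n - Fintype.card F ^ j)) *
        (Fintype.card F ^ (i * (n - i)) *
          Nat.card {D : Matrix (Fin (n - i)) (Fin (n - i)) F // IsNilpotent D}) := by
  obtain ⟨m, rfl⟩ := Nat.exists_eq_add_of_le hi
  have := Fintype.ofFinite {U : Submodule F (Fin (i + m) → F) // Module.finrank F U = i}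
  have hfiber (U : {U : Submodule F (Fin (i + m) → F) // Module.finrank F U = i}) :
      Nat.card {X : Matrix (Fin (i + m)) (Fin (i + m)) F // Vinv X = U.1} =
        Nat.card {X : Matrix (Fin (i + m)) (Fin (i + m)) F // Vinv X = coordSubspace F i m} :=
    card_Vinv_eq_of_finrank_eq (U.2.trans finrank_coordSubspace.symm)
  have hbases := card_submodule_mul_card_GL (F := F) (V := Fin (i + m) → F) (k := i) (by simp)
  rw [Module.finrank_fin_fun] at hbases
  rw [← Nat.card_congr (Equiv.sigmaSubtypeFiberEquivSubtype Vinv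
      (q := fun U => Module.finrank F U = i) fun X => Iff.rfl), Nat.card_sigma,
    sum_congr rfl fun U _ => hfiber U, sum_const, card_univ, smul_eq_mul,
    ← Nat.card_eq_fintype_card, card_matrix_Vinv_eq_coordSubspace, ← hbases,
    Nat.card_eq_fintype_card (α := F), Nat.add_sub_cancel_left]
  ring

theorem sum_card_matrix_finrank_Vinv_eq (n : ℕ) :
    ∑ i ∈ range (n + 1),
      Nat.card {X : Matrix (Fin n) (Fin n) F // Module.finrank F (Vinv X) = i} =
        Fintype.card F ^ (n * n) := by
  classical
  have hmaps : Set.MapsTo (fun X : Matrix (Fin n) (Fin n) F => Module.finrank F (Vinv X))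
      (Finset.univ : Finset (Matrix (Fin n) (Fin n) F)) (range (n + 1)) := fun X _ => by
    simpa [Nat.lt_succ_iff] using (Vinv X).finrank_le
  calc ∑ i ∈ range (n + 1),
        Nat.card {X : Matrix (Fin n) (Fin n) F // Module.finrank F (Vinv X) = i}
      = ∑ i ∈ range (n + 1), #{X : Matrix (Fin n) (Fin n) F | Module.finrank F (Vinv X) = i} :=
        sum_congr rfl fun i _ => by rw [Nat.card_eq_fintype_card, Fintype.card_subtype]
    _ = Nat.card (Matrix (Fin n) (Fin n) F) := by
        rw [← card_eq_sum_card_fiberwise hmaps, card_univ, Nat.card_eq_fintype_card]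
    _ = Fintype.card F ^ (n * n) := by
        rw [card_matrix, Nat.card_fin, Nat.card_eq_fintype_card]

-- When `q` is the order of a field `F`, the `i`-th summand counts the `n`-tuples of vectors in
-- `F ^ n` whose longest linearly independent prefix has length `i`, and the last term those tuples
-- whose first `k` vectors are independent.
theorem sum_prod_mul_pow_add_eq_pow (q n k : ℕ) (hq : 0 < q) (hk : k ≤ n) :
    ∑ i ∈ range k, (∏ j ∈ range i, (q ^ n - q ^ j)) *
        (q ^ (i * (n - i)) * q ^ ((n - i) * (n - i - 1))) +
      (∏ j ∈ range k, (q ^ n - q ^ j)) * q ^ (n * (n - k)) = q ^ (n * n) := by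
  induction k with
  | zero => simp
  | succ k ih =>
    obtain ⟨m, rfl⟩ := Nat.exists_eq_add_of_le hk
    have hle : q ^ k ≤ q ^ (k + 1 + m) := Nat.pow_le_pow_right hq (by omega)
    rw [← ih (by omega), sum_range_succ, prod_range_succ, add_assoc, mul_assoc, ← mul_add]
    congr 2
    zify [hle]
    have hsub_succ : k + 1 + m - (k + 1) = m := by omega
    have hsub : k + 1 + m - k = m + 1 := by omega
    rw [hsub_succ, hsub, Nat.add_sub_cancel]
    ring

theorem card_isNilpotent_matrix (n : ℕ) :
    Nat.card {D : Matrix (Fin n) (Fin n) F // IsNilpotent D} = Fintype.card F ^ (n * (n - 1)) := by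
  induction n using Nat.strong_induction_on with
  | _ n ih =>
    let q := Fintype.card F
    let indep (i : ℕ) : ℕ := ∏ j ∈ range i, (q ^ n - q ^ j)
    let nilp (m : ℕ) : ℕ := Nat.card {D : Matrix (Fin m) (Fin m) F // IsNilpotent D}
    have hmatrices : ∑ i ∈ range (n + 1), indep i * (q ^ (i * (n - i)) * nilp (n - i)) =
        q ^ (n * n) := by
      rw [← sum_card_matrix_finrank_Vinv_eq (F := F) n]
      exact sum_congr rfl fun i hi => (card_matrix_finrank_Vinv_eq (mem_range_succ_iff.1 hi)).symm
    have htuples : ∑ i ∈ range (n + 1),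
        indep i * (q ^ (i * (n - i)) * q ^ ((n - i) * (n - i - 1))) = q ^ (n * n) := by
      rw [sum_range_succ, ← sum_prod_mul_pow_add_eq_pow q n n Fintype.card_pos le_rfl]
      simp [indep]
    have hsmaller : ∀ i ∈ range n,
        indep (i + 1) * (q ^ ((i + 1) * (n - (i + 1))) * nilp (n - (i + 1))) =
          indep (i + 1) * (q ^ ((i + 1) * (n - (i + 1))) *
            q ^ ((n - (i + 1)) * (n - (i + 1) - 1))) := fun i hi => by
      have hlt : n - (i + 1) < n := by have := mem_range.1 hi; omega
      rw [show nilp (n - (i + 1)) = _ from ih _ hlt]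
    rw [← htuples, sum_range_succ', sum_range_succ', sum_congr rfl hsmaller,
      Nat.add_left_cancel_iff] at hmatrices
    simpa [indep] using hmatrices

end NilpotentCount

theorem stmt4 (q d : ℕ) (hq : IsPrimePow q) (hd : 0 < d)
    (F : Type*) [Field F] [Fintype F] (hF : Fintype.card F = q)
    (N : Set (Matrix (Fin d) (Fin d) F)) (hN : IsNI N) (i : ℕ) (hi : i ≤ d)
    (W : Submodule F (Fin d → F))
    (hW : W = Submodule.span F (Set.range fun j : Fin i => Pi.single (Fin.castLE hi j) (1 : F))) :
    Nat.card {X : Matrix (Fin d) (Fin d) F | X ∈ N ∧ Vinv X = W} =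
      q ^ (i * (d - i)) * q ^ ((d - i) * (d - i - 1)) * Nat.card (NIsub N i) := by
  obtain ⟨m, rfl⟩ := Nat.exists_eq_add_of_le hi
  subst hF
  rw [hW, span_single_castLE, hN.card_Vinv_eq_coordSubspace, card_isNilpotent_matrix,
    Nat.card_eq_fintype_card, Nat.add_sub_cancel_left]
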